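/- Let φ : L → L' be an injective bounded lattice homomorphism between bounded distributive lattices and let B be a finite Boolean algebra. Let ⊢ and ⊢' be the entailment relations of B-valued lattice maps on L and on L' respectively, and let f_φ : L × B → L' × B be given by f_φ(x,a) = (φ(x), a). Then f_φ is a conservative interpretation: for all finite subsets X, Y of L × B, X ⊢ Y if and only if f_φ(X) ⊢' f_φ(Y). -/

import Mathlib

/-- An entailment relation on a set `S`: a relation between finite subsets of `S`
satisfying reflexivity (R), monotonicity (M) and transitivity/cut (T). -/
def IsEntailment {S : Type*} [DecidableEq S] (E : Finset S → Finset S → Prop) : Prop :=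
  (∀ X Y : Finset S, (∃ x, x ∈ X ∧ x ∈ Y) → E X Y) ∧
  (∀ X X' Y Y' : Finset S, E X Y → E (X ∪ X') (Y ∪ Y')) ∧
  (∀ X Y : Finset S, ∀ z : S, E X (insert z Y) → E (insert z X) Y → E X Y)

variable (M : Type*) (D : Type*) [Lattice M] [BoundedOrder M] [Lattice D] [BoundedOrder D]
  [Fintype D] [DecidableEq M] [DecidableEq D]

/-- The generating axioms (s), (∧), (∨), (0), (1), (t) for the entailment relation
of `D`-valued lattice maps on `M`. -/
def LatticeAxioms : Finset (M × D) → Finset (M × D) → Prop := fun X Y =>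
  (∃ x a b, a ≠ b ∧ X = {(x, a), (x, b)} ∧ Y = ∅) ∨
  (∃ x y a b, X = {(x, a), (y, b)} ∧ Y = {(x ⊓ y, a ⊓ b)}) ∨
  (∃ x y a b, X = {(x, a), (y, b)} ∧ Y = {(x ⊔ y, a ⊔ b)}) ∨
  (X = ∅ ∧ Y = {((⊥ : M), (⊥ : D))}) ∨
  (X = ∅ ∧ Y = {((⊤ : M), (⊤ : D))}) ∨
  (∃ x : M, X = ∅ ∧ Y = Finset.univ.image (fun a : D => (x, a)))

/-- The least entailment relation on `M × D` containing all the generating axioms: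
the entailment relation of `D`-valued lattice maps on `M`. -/
def LatticeEntails (X Y : Finset (M × D)) : Prop :=
  ∀ E : Finset (M × D) → Finset (M × D) → Prop,
    IsEntailment E → (∀ X' Y', LatticeAxioms M D X' Y' → E X' Y') → E X Y

/-!
Entailment relations are complete for their models: if `X ⊬ Y`, Zorn's lemma gives a set `T ⊇ X`
maximal among those with no finite subset entailing `Y`, and the cut rule makes `T` a model that
avoids `Y`. A model of the axioms of `D`-valued lattice maps on `M` is exactly the graph of a
bounded lattice homomorphism `M → D`, so `X ⊢ Y` says that each such homomorphism whose graph
contains `X` has a graph meeting `Y`. Conservativity thus reduces to every homomorphism `L → B`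
being the restriction along `φ` of one `L' → B`. A finite Boolean algebra is the powerset of
its atoms, so it is enough to extend homomorphisms to `Prop`, that is, prime ideals. For these,
order reflection by `φ` keeps the images of a prime ideal and of its complement separated, and the
prime ideal theorem separates them by a prime ideal of `L'`.
-/

section Entailment

variable {S : Type*}

/-- The sequent `X ⊢ Y` holds in `T`: if all of `X` belongs to `T`, then so does some element
of `Y`. A set `T` is a model of a relation `E` between finite sets if `E ≤ SatisfiesSequent T`. -/
def SatisfiesSequent (T : Set S) (X Y : Finset S) : Prop :=
  ↑X ⊆ T → ∃ y ∈ Y, y ∈ T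

theorem satisfiesSequent_image_iff {S' : Type*} [DecidableEq S'] {f : S → S'} {T : Set S'}
    {X Y : Finset S} :
    SatisfiesSequent T (X.image f) (Y.image f) ↔ SatisfiesSequent (f ⁻¹' T) X Y := by
  simp [SatisfiesSequent]

/-- No finite part of `T` entails `Y`; maximal such sets `T` are models of `E`. -/
def IsConsistent (E : Finset S → Finset S → Prop) (Y : Finset S) (T : Set S) : Prop :=
  ∀ A : Finset S, ↑A ⊆ T → ¬ E A Y

theorem IsConsistent.sUnion {E : Finset S → Finset S → Prop} {Y : Finset S} {c : Set (Set S)}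
    (hc : ∀ T ∈ c, IsConsistent E Y T) (hchain : IsChain (· ⊆ ·) c) (hne : c.Nonempty) :
    IsConsistent E Y (⋃₀ c) := by
  intro A hA
  obtain ⟨T, hTc, hAT⟩ :=
    hchain.directedOn.exists_mem_subset_of_finite_of_subset_sUnion hne A.finite_toSet hA
  exact hc T hTc A hAT

theorem IsConsistent.exists_maximal {E : Finset S → Finset S → Prop} {Y : Finset S} {T₀ : Set S}
    (h : IsConsistent E Y T₀) : ∃ T, T₀ ⊆ T ∧ Maximal (IsConsistent E Y) T :=
  zorn_subset_nonempty {T | IsConsistent E Y T}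
    (fun c hc hchain hne =>
      ⟨⋃₀ c, IsConsistent.sUnion hc hchain hne, fun _ => Set.subset_sUnion_of_mem⟩) T₀ h

variable [DecidableEq S]

theorem isEntailment_satisfiesSequent (T : Set S) : IsEntailment (SatisfiesSequent T) := by
  refine ⟨fun X Y ⟨x, hxX, hxY⟩ hX => ⟨x, hxY, hX hxX⟩, fun X X' Y Y' h hX => ?_,
    fun X Y z hright hleft hX => ?_⟩
  · rw [Finset.coe_union, Set.union_subset_iff] at hX
    obtain ⟨y, hyY, hyT⟩ := h hX.1
    exact ⟨y, Finset.mem_union_left _ hyY, hyT⟩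
  · obtain ⟨y, hy, hyT⟩ := hright hX
    rcases Finset.mem_insert.1 hy with rfl | hyY
    · exact hleft (by rw [Finset.coe_insert]; exact Set.insert_subset hyT hX)
    · exact ⟨y, hyY, hyT⟩

namespace IsEntailment

variable {E : Finset S → Finset S → Prop} {X X' Y Y' C : Finset S} {T : Set S}

theorem mono (hE : IsEntailment E) (hX : X ⊆ X') (hY : Y ⊆ Y') (h : E X Y) : E X' Y' := by
  simpa only [Finset.union_eq_right.2 hX, Finset.union_eq_right.2 hY] using hE.2.1 X X' Y Y' h

theorem isConsistent_coe (hE : IsEntailment E) (h : ¬ E X Y) : IsConsistent E Y ↑X :=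
  fun _ hA hAY => h (hE.mono (Finset.coe_subset.1 hA) subset_rfl hAY)

theorem disjoint_of_isConsistent (hE : IsEntailment E) (hT : IsConsistent E Y T) :
    Disjoint ↑Y T :=
  Set.disjoint_left.2 fun y hyY hyT =>
    hT {y} (by simpa using hyT) (hE.1 _ _ ⟨y, Finset.mem_singleton_self y, hyY⟩)

theorem exists_entails_insert_of_maximal (hE : IsEntailment E) (hT : Maximal (IsConsistent E Y) T)
    {z : S} (hz : z ∉ T) : ∃ A : Finset S, ↑A ⊆ T ∧ E (insert z A) Y := by
  have hins : ¬ IsConsistent E Y (insert z T) := fun h =>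
    hz (hT.le_of_ge h (Set.subset_insert z T) (Set.mem_insert z T))
  obtain ⟨A, hA, hAY⟩ : ∃ A : Finset S, ↑A ⊆ insert z T ∧ E A Y := by
    simpa [IsConsistent] using hins
  refine ⟨A.erase z, ?_, hE.mono (Finset.insert_erase_subset z A) subset_rfl hAY⟩
  rwa [Finset.coe_erase, Set.sdiff_singleton_subset_iff]

theorem isConsistent_union_of_maximal (hE : IsEntailment E) (hT : Maximal (IsConsistent E Y) T)
    (hC : Disjoint ↑C T) : IsConsistent E (C ∪ Y) T := by
  induction C using Finset.induction_on with
  | empty => simpa using hT.prop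
  | insert z C _ ih =>
    rw [Finset.coe_insert, Set.disjoint_insert_left] at hC
    obtain ⟨A₀, hA₀, hzA₀⟩ := hE.exists_entails_insert_of_maximal hT hC.1
    intro A hA hAC
    refine ih hC.2 (A ∪ A₀) (by simp [hA, hA₀]) (hE.2.2 _ _ z ?_ ?_)
    · rw [← Finset.insert_union]
      exact hE.mono Finset.subset_union_left subset_rfl hAC
    · exact hE.mono (Finset.insert_subset_insert _ Finset.subset_union_right)
        Finset.subset_union_right hzA₀

theorem le_satisfiesSequent_of_maximal (hE : IsEntailment E)
    (hT : Maximal (IsConsistent E Y) T) : E ≤ SatisfiesSequent T := by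
  intro A C hAC hA
  by_contra! hC
  exact hE.isConsistent_union_of_maximal hT (Set.disjoint_left.2 hC) A hA
    (hE.mono subset_rfl Finset.subset_union_left hAC)

end IsEntailment

theorem IsEntailment.entails_iff_forall_satisfiesSequent {E : Finset S → Finset S → Prop}
    (hE : IsEntailment E) {X Y : Finset S} :
    E X Y ↔ ∀ T, E ≤ SatisfiesSequent T → SatisfiesSequent T X Y := by
  refine ⟨fun h T hT => hT X Y h, fun h => ?_⟩
  by_contra hXY
  obtain ⟨T, hXT, hT⟩ := (hE.isConsistent_coe hXY).exists_maximal
  obtain ⟨y, hyY, hyT⟩ := h T (hE.le_satisfiesSequent_of_maximal hT) hXT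
  exact Set.disjoint_left.1 (hE.disjoint_of_isConsistent hT.prop) hyY hyT

end Entailment

section LatticeEntails

variable {M D}

theorem isEntailment_latticeEntails : IsEntailment (LatticeEntails M D) :=
  ⟨fun X Y h _ hE _ => hE.1 X Y h,
    fun X X' Y Y' h E hE hax => hE.2.1 X X' Y Y' (h E hE hax),
    fun X Y z hright hleft E hE hax => hE.2.2 X Y z (hright E hE hax) (hleft E hE hax)⟩

theorem latticeEntails_le_satisfiesSequent_iff {T : Set (M × D)} :
    LatticeEntails M D ≤ SatisfiesSequent T ↔ LatticeAxioms M D ≤ SatisfiesSequent T :=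
  ⟨fun h X Y hXY => h X Y fun _ _ hax => hax X Y hXY,
    fun h _ _ hXY => hXY _ (isEntailment_satisfiesSequent T) h⟩

theorem latticeAxioms_le_iff {E : Finset (M × D) → Finset (M × D) → Prop} :
    LatticeAxioms M D ≤ E ↔
      (∀ x a b, a ≠ b → E {(x, a), (x, b)} ∅) ∧
      (∀ x y a b, E {(x, a), (y, b)} {(x ⊓ y, a ⊓ b)}) ∧
      (∀ x y a b, E {(x, a), (y, b)} {(x ⊔ y, a ⊔ b)}) ∧
      E ∅ {(⊥, ⊥)} ∧ E ∅ {(⊤, ⊤)} ∧ ∀ x, E ∅ (Finset.univ.image fun a => (x, a)) := by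
  constructor
  · intro h
    exact ⟨fun x a b hab => h _ _ (Or.inl ⟨x, a, b, hab, rfl, rfl⟩),
      fun x y a b => h _ _ (Or.inr <| .inl ⟨x, y, a, b, rfl, rfl⟩),
      fun x y a b => h _ _ (Or.inr <| .inr <| .inl ⟨x, y, a, b, rfl, rfl⟩),
      h _ _ (Or.inr <| .inr <| .inr <| .inl ⟨rfl, rfl⟩),
      h _ _ (Or.inr <| .inr <| .inr <| .inr <| .inl ⟨rfl, rfl⟩),
      fun x => h _ _ (Or.inr <| .inr <| .inr <| .inr <| .inr ⟨x, rfl, rfl⟩)⟩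
  · rintro ⟨hsingle, hinf, hsup, hbot, htop, htotal⟩ X Y
      (⟨x, a, b, hab, rfl, rfl⟩ | ⟨x, y, a, b, rfl, rfl⟩ | ⟨x, y, a, b, rfl, rfl⟩ |
        ⟨rfl, rfl⟩ | ⟨rfl, rfl⟩ | ⟨x, rfl, rfl⟩)
    exacts [hsingle x a b hab, hinf x y a b, hsup x y a b, hbot, htop, htotal x]

theorem latticeAxioms_le_satisfiesSequent_iff {T : Set (M × D)} :
    LatticeAxioms M D ≤ SatisfiesSequent T ↔
      (∀ x a b, a ≠ b → (x, a) ∈ T → (x, b) ∉ T) ∧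
      (∀ x y a b, (x, a) ∈ T → (y, b) ∈ T → (x ⊓ y, a ⊓ b) ∈ T) ∧
      (∀ x y a b, (x, a) ∈ T → (y, b) ∈ T → (x ⊔ y, a ⊔ b) ∈ T) ∧
      (⊥, ⊥) ∈ T ∧ (⊤, ⊤) ∈ T ∧ ∀ x, ∃ a, (x, a) ∈ T := by
  simp [latticeAxioms_le_iff, SatisfiesSequent, Set.insert_subset_iff]

theorem latticeAxioms_le_satisfiesSequent_iff_exists_boundedLatticeHom {T : Set (M × D)} :
    LatticeAxioms M D ≤ SatisfiesSequent T ↔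
      ∃ g : BoundedLatticeHom M D, T = {p | g p.1 = p.2} := by
  rw [latticeAxioms_le_satisfiesSequent_iff]
  constructor
  · rintro ⟨hsingle, hinf, hsup, hbot, htop, htotal⟩
    choose g hg using htotal
    have hgraph : ∀ {x a}, (x, a) ∈ T → g x = a := fun {x a} hxa =>
      by_contra fun hne => hsingle x (g x) a hne (hg x) hxa
    exact ⟨{
      toFun := g
      map_sup' := fun x y => hgraph (hsup x y _ _ (hg x) (hg y))
      map_inf' := fun x y => hgraph (hinf x y _ _ (hg x) (hg y))
      map_top' := hgraph htop
      map_bot' := hgraph hbot },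
      Set.ext fun ⟨x, a⟩ => ⟨hgraph, fun (hxa : g x = a) => hxa ▸ hg x⟩⟩
  · rintro ⟨g, rfl⟩
    simp +contextual

theorem latticeEntails_iff_forall_boundedLatticeHom {X Y : Finset (M × D)} :
    LatticeEntails M D X Y ↔
      ∀ g : BoundedLatticeHom M D, SatisfiesSequent {p | g p.1 = p.2} X Y := by
  simp only [isEntailment_latticeEntails.entails_iff_forall_satisfiesSequent,
    latticeEntails_le_satisfiesSequent_iff,
    latticeAxioms_le_satisfiesSequent_iff_exists_boundedLatticeHom, forall_exists_index,
    forall_eq_apply_imp_iff]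

end LatticeEntails

section Extension

open Order

/-- The ideal generated by the image of an ideal under a monotone map, namely the lower closure
of that image. -/
def idealMap {P Q : Type*} [Preorder P] [Preorder Q] (f : P →o Q) (I : Ideal P) : Ideal Q where
  toLowerSet := lowerClosure (f '' I)
  nonempty' := (I.nonempty.image f).mono subset_lowerClosure
  directed' := by
    rintro a ⟨_, ⟨x, hx, rfl⟩, hax⟩ b ⟨_, ⟨y, hy, rfl⟩, hby⟩
    obtain ⟨z, hz, hxz, hyz⟩ := I.directed x hx y hy
    exact ⟨f z, subset_lowerClosure (Set.mem_image_of_mem f hz), hax.trans (f.monotone hxz),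
      hby.trans (f.monotone hyz)⟩

theorem mem_idealMap {P Q : Type*} [Preorder P] [Preorder Q] {f : P →o Q} {I : Ideal P} {y : Q} :
    y ∈ idealMap f I ↔ ∃ x ∈ I, y ≤ f x := by
  change y ∈ lowerClosure (f '' (I : Set P)) ↔ _
  simp [mem_lowerClosure]

theorem exists_isPrime_forall_apply_mem_iff {P Q : Type*} [Preorder P] [DistribLattice Q]
    (f : P ↪o Q) {I : Ideal P} (hI : I.IsPrime) :
    ∃ J : Ideal Q, J.IsPrime ∧ ∀ x, f x ∈ J ↔ x ∈ I := by
  let F : PFilter Q := ⟨idealMap f.toOrderHom.dual hI.compl_filter.toPFilter.dual⟩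
  have mem_F {y : Q} : y ∈ F ↔ ∃ x ∉ I, f x ≤ y :=
    mem_idealMap (f := f.toOrderHom.dual) (y := OrderDual.toDual y)
  have hdisj : Disjoint (F : Set Q) (idealMap f.toOrderHom I : Set Q) := by
    refine Set.disjoint_left.2 fun y hyF hyI => ?_
    obtain ⟨x, hx, hxy⟩ := mem_F.1 hyF
    obtain ⟨z, hz, hyz⟩ := mem_idealMap.1 hyI
    exact hx (I.lower (f.le_iff_le.1 (hxy.trans hyz)) hz)
  obtain ⟨J, hJ, hIJ, hFJ⟩ := DistribLattice.prime_ideal_of_disjoint_filter_ideal hdisj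
  refine ⟨J, hJ, fun x => ⟨fun hxJ => ?_, fun hxI => hIJ (mem_idealMap.2 ⟨x, hxI, le_rfl⟩)⟩⟩
  by_contra hxI
  exact Set.disjoint_left.1 hFJ (mem_F.2 ⟨x, hxI, le_rfl⟩) hxJ

variable {K K' : Type*} [Lattice K] [BoundedOrder K]

/-- The bounded lattice homomorphism to the truth values attached to a prime ideal: it sends
the elements of the ideal to `False`. -/
def primeIdealHom {J : Ideal K} (hJ : J.IsPrime) : BoundedLatticeHom K Prop where
  toFun x := x ∉ J
  map_sup' x y := by simp [imp_iff_not_or]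
  map_inf' x y := propext ⟨fun h => ⟨fun hx => h (J.lower inf_le_left hx),
    fun hy => h (J.lower inf_le_right hy)⟩, fun h hxy => (hJ.mem_or_mem hxy).elim h.1 h.2⟩
  map_top' := by simpa using hJ.toIsProper.top_notMem
  map_bot' := by simp

theorem exists_isPrime_mem_iff_not (h : BoundedLatticeHom K Prop) :
    ∃ I : Ideal K, I.IsPrime ∧ ∀ x, x ∈ I ↔ ¬ h x := by
  let I : Ideal K := {
    carrier := {x | ¬ h x}
    lower' := fun _ _ hyx hx hy => hx (OrderHomClass.mono h hyx hy)
    nonempty' := ⟨⊥, by simp⟩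
    directed' := fun x hx y hy =>
      ⟨x ⊔ y, by simpa using ⟨hx, hy⟩, le_sup_left, le_sup_right⟩ }
  have mem_I {x : K} : x ∈ I ↔ ¬ h x := Iff.rfl
  have : I.IsProper := Ideal.isProper_of_notMem (p := ⊤) (by simp [mem_I])
  refine ⟨I, Ideal.IsPrime.of_mem_or_mem fun {x y} hxy => ?_, fun _ => mem_I⟩
  simpa [mem_I, imp_iff_not_or] using hxy

variable [DistribLattice K'] [BoundedOrder K'] {φ : BoundedLatticeHom K K'}

theorem exists_comp_eq_of_injective_prop (hφ : Function.Injective φ)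
    (h : BoundedLatticeHom K Prop) :
    ∃ k : BoundedLatticeHom K' Prop, k.comp φ = h := by
  obtain ⟨I, hI, mem_I⟩ := exists_isPrime_mem_iff_not h
  obtain ⟨J, hJ, mem_J⟩ := exists_isPrime_forall_apply_mem_iff (orderEmbeddingOfInjective φ hφ) hI
  refine ⟨primeIdealHom hJ, BoundedLatticeHom.ext fun x => propext ?_⟩
  calc φ x ∉ J ↔ x ∉ I := (mem_J x).not
    _ ↔ h x := by rw [mem_I, not_not]

theorem exists_comp_eq_of_injective_set {A : Type*} (hφ : Function.Injective φ)
    (g : BoundedLatticeHom K (Set A)) :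
    ∃ k : BoundedLatticeHom K' (Set A), k.comp φ = g := by
  let evalHom (a : A) : BoundedLatticeHom (Set A) Prop := {
    toFun s := a ∈ s
    map_sup' _ _ := rfl
    map_inf' _ _ := rfl
    map_top' := rfl
    map_bot' := rfl }
  choose k hk using fun a => exists_comp_eq_of_injective_prop hφ ((evalHom a).comp g)
  refine ⟨{
    toFun y := {a | k a y}
    map_sup' y z := by ext a; simp
    map_inf' y z := by ext a; simp
    map_top' := by ext a; simp
    map_bot' := by ext a; simp }, BoundedLatticeHom.ext fun x => Set.ext fun a => ?_⟩
  exact (DFunLike.congr_fun (hk a) x).to_iff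

theorem exists_comp_eq_of_injective {B : Type*} [CompleteAtomicBooleanAlgebra B]
    (hφ : Function.Injective φ) (g : BoundedLatticeHom K B) :
    ∃ k : BoundedLatticeHom K' B, k.comp φ = g := by
  let e : B ≃o Set {a : B // IsAtom a} := CompleteAtomicBooleanAlgebra.toSetOfIsAtom
  obtain ⟨k, hk⟩ := exists_comp_eq_of_injective_set hφ
    ((e : BoundedLatticeHom B (Set {a : B // IsAtom a})).comp g)
  refine ⟨(e.symm : BoundedLatticeHom _ B).comp k, BoundedLatticeHom.ext fun x => ?_⟩
  exact e.symm_apply_eq.2 (DFunLike.congr_fun hk x)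

end Extension

theorem stmt13 {L L' B : Type*} [DistribLattice L] [BoundedOrder L]
    [DistribLattice L'] [BoundedOrder L'] [BooleanAlgebra B] [Fintype B]
    [DecidableEq L] [DecidableEq L'] [DecidableEq B]
    (φ : BoundedLatticeHom L L') (hφ : Function.Injective φ)
    (X Y : Finset (L × B)) :
    LatticeEntails L B X Y ↔
      LatticeEntails L' B (X.image fun p => (φ p.1, p.2)) (Y.image fun p => (φ p.1, p.2)) := by
  let _ : CompleteAtomicBooleanAlgebra B := Fintype.toCompleteAtomicBooleanAlgebra B
  simp only [latticeEntails_iff_forall_boundedLatticeHom, satisfiesSequent_image_iff]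
  constructor
  · intro h k
    exact h (k.comp φ)
  · intro h g
    obtain ⟨k, rfl⟩ := exists_comp_eq_of_injective hφ g
    exact h k
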